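/- arXiv:2506.14538 — 4 statements merged into one kernel-verified Lean document; each statement's English description precedes it below -/
import Mathlib

section
/- Let α be a type with an action of the group of finite permutations of ℕ. Let S be a finite subset of ℕ and b ∈ ℕ with b ∉ S. Let X ⊆ α be such that π • X = X for every finite permutation π fixing every element of S ∪ {b}. Write Fix(T) for the subgroup of finite permutations of ℕ fixing every element of T. Then there exists an injective function from the set of Fix(S)-orbits {orbit_{Fix(S)}(y) | y ∈ ⋃_{a ∉ S} (swap a b) • X} into the set of Fix(S ∪ {b})-orbits {orbit_{Fix(S∪{b})}(x) | x ∈ X}, where (swap a b) • X = {(Equiv.swap a b) • x | x ∈ X}. -/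
/-!
For `a, b ∉ S` the transposition `swap a b` lies in `Fix(S)`, so every `Fix(S)`-orbit in the source
already contains an element of `X`. Choose such a representative `x` for each orbit and send the
orbit to the `Fix(S ∪ {b})`-orbit of `x`. This is injective since `Fix(S ∪ {b}) ≤ Fix(S)`:
representatives in the same `Fix(S ∪ {b})`-orbit are in the same `Fix(S)`-orbit.
-/

open Pointwise

/-- The orbit of `y : α` under the group of finite permutations of `ℕ` that fix the
set `T` pointwise. -/
def finPermOrbit {α : Type*} [MulAction (Equiv.Perm ℕ) α] (T : Set ℕ) (y : α) : Set α :=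
  {z | ∃ π : Equiv.Perm ℕ, ({a : ℕ | π a ≠ a}).Finite ∧ (∀ a ∈ T, π a = a) ∧ z = π • y}

/-- The finite permutations fixing `T` pointwise form a group, so two of their orbits that meet
coincide. -/
theorem finPermOrbit_eq_of_mem {α : Type*} [MulAction (Equiv.Perm ℕ) α] {T : Set ℕ} {y z : α}
    (h : z ∈ finPermOrbit T y) : finPermOrbit T z = finPermOrbit T y := by
  obtain ⟨π, hfin, hfix, rfl⟩ := h
  ext w
  constructor
  · rintro ⟨σ, hσ, hσT, rfl⟩
    refine ⟨σ * π, (hσ.union hfin).subset ?_, ?_, by rw [mul_smul]⟩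
    · intro a ha
      by_contra hc
      simp only [Set.mem_union, Set.mem_setOf_eq, not_or, not_not] at hc
      exact ha (by rw [Equiv.Perm.mul_apply, hc.2, hc.1])
    · intro a ha
      rw [Equiv.Perm.mul_apply, hfix a ha, hσT a ha]
  · rintro ⟨σ, hσ, hσT, rfl⟩
    refine ⟨σ * π⁻¹, (hσ.union hfin).subset ?_, ?_, by rw [mul_smul, inv_smul_smul]⟩
    · intro a ha
      by_contra hc
      simp only [Set.mem_union, Set.mem_setOf_eq, not_or, not_not] at hc
      exact ha (by rw [Equiv.Perm.mul_apply, Equiv.Perm.inv_eq_iff_eq.2 hc.2.symm, hc.1])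
    · intro a ha
      rw [Equiv.Perm.mul_apply, Equiv.Perm.inv_eq_iff_eq.2 (hfix a ha).symm, hσT a ha]

theorem mem_finPermOrbit_self {α : Type*} [MulAction (Equiv.Perm ℕ) α] (T : Set ℕ) (y : α) :
    y ∈ finPermOrbit T y :=
  ⟨1, by simp, by simp, by simp⟩

theorem finPermOrbit_anti {α : Type*} [MulAction (Equiv.Perm ℕ) α] {T U : Set ℕ} (h : T ⊆ U)
    (y : α) : finPermOrbit U y ⊆ finPermOrbit T y := by
  rintro _ ⟨π, hfin, hfix, rfl⟩
  exact ⟨π, hfin, fun a ha => hfix a (h ha), rfl⟩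

theorem swap_smul_mem_finPermOrbit {α : Type*} [MulAction (Equiv.Perm ℕ) α] {T : Set ℕ} {a b : ℕ}
    (ha : a ∉ T) (hb : b ∉ T) (x : α) : Equiv.swap a b • x ∈ finPermOrbit T x := by
  refine ⟨Equiv.swap a b, (Set.toFinite {a, b}).subset ?_, ?_, rfl⟩
  · intro c hc
    by_contra hn
    simp only [Set.mem_insert_iff, Set.mem_singleton_iff, not_or] at hn
    exact hc (Equiv.swap_apply_of_ne_of_ne hn.1 hn.2)
  · intro c hc
    exact Equiv.swap_apply_of_ne_of_ne (fun h => ha (h ▸ hc)) (fun h => hb (h ▸ hc))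

/-- If `b ∉ S` with `S` finite, and `X` is fixed by every finite permutation fixing
`S ∪ {b}` pointwise, then there is an injection from the set of `Fix(S)`-orbits of
elements of `⋃_{a ∉ S} (swap a b) • X` into the set of `Fix(S ∪ {b})`-orbits of
elements of `X`. -/
theorem orbits_injection_of_fresh {α : Type*} [MulAction (Equiv.Perm ℕ) α]
    (S : Set ℕ) (hS : S.Finite) (b : ℕ) (hb : b ∉ S) (X : Set α)
    (hX : ∀ π : Equiv.Perm ℕ, ({a : ℕ | π a ≠ a}).Finite →
      (∀ a ∈ S ∪ {b}, π a = a) → π • X = X) :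
    ∃ f : {O : Set α | ∃ y ∈ ⋃ a ∈ {a : ℕ | a ∉ S}, Equiv.swap a b • X,
            O = finPermOrbit S y} →
          {O : Set α | ∃ x ∈ X, O = finPermOrbit (S ∪ {b}) x},
      Function.Injective f := by
  have key : ∀ O : {O : Set α | ∃ y ∈ ⋃ a ∈ {a : ℕ | a ∉ S}, Equiv.swap a b • X,
      O = finPermOrbit S y}, ∃ x ∈ X, (O : Set α) = finPermOrbit S x := by
    rintro ⟨O, y, hy, rfl⟩
    simp only [Set.mem_iUnion] at hy
    obtain ⟨a, ha, x, hx, rfl⟩ := hy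
    exact ⟨x, hx, finPermOrbit_eq_of_mem (swap_smul_mem_finPermOrbit ha hb x)⟩
  choose r hrX hr using key
  refine ⟨fun O => ⟨finPermOrbit (S ∪ {b}) (r O), r O, hrX O, rfl⟩, fun O O' h => ?_⟩
  have h' : finPermOrbit (S ∪ {b}) (r O) = finPermOrbit (S ∪ {b}) (r O') :=
    congrArg Subtype.val h
  have hmem : r O ∈ finPermOrbit S (r O') :=
    finPermOrbit_anti Set.subset_union_left _ (h' ▸ mem_finPermOrbit_self _ _)
  exact Subtype.ext (by rw [hr O, hr O', finPermOrbit_eq_of_mem hmem])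
end

section
/- For all natural numbers n₁, n₂ with n₁ ≥ 2 and n₂ ≤ n₁, the following inequality holds: (n₁ − 1) · ∑_{i=0}^{n₂} C(n₂, i) · descFactorial(n₁, i) ≤ n₁^{n₂ + 1}. Equivalently, ∑_{i=0}^{n₂} C(n₂, i) · descFactorial(n₁, i) ≤ n₁^{n₂} · (1 + 1/(n₁ − 1)). -/
/-!
Write `S b = ∑ i ≤ b, C(b, i) · a^{(i)}`, where `a^{(i)}` is the descending factorial. Pascal's rule
and `a^{(i+1)} = (a - i) · a^{(i)}` give `S (b + 1) = ∑ i ≤ b, C(b, i) · a^{(i)} · (1 + (a - i))`.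
Compared with `a · S b`, the term `i = 0` has an excess of `1`, the term `i = 1` is equal, and every
term `i ≥ 2` is at most its counterpart; for `b ≥ 2` the term `i = 2` alone has a deficit of at least
`1`. Hence `S (b + 1) ≤ a · S b` for `b ≥ 2`, and the bound follows by induction from
`(a - 1) · S 2 = (a - 1) (a² + a + 1) = a³ - 1`.
-/

lemma sum_choose_succ_mul (b : ℕ) (f : ℕ → ℕ) :
    ∑ i ∈ Finset.range (b + 2), (b + 1).choose i * f i =
      ∑ i ∈ Finset.range (b + 1), b.choose i * (f i + f (i + 1)) := by
  have h : ∑ i ∈ Finset.range (b + 1), b.choose (i + 1) * f (i + 1) + b.choose 0 * f 0 =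
      ∑ i ∈ Finset.range (b + 1), b.choose i * f i := by
    rw [← Finset.sum_range_succ' (fun i => b.choose i * f i), Finset.sum_range_succ]
    simp
  rw [Finset.sum_range_succ']
  simp only [Nat.choose_succ_succ', mul_add, add_mul, Finset.sum_add_distrib, ← h]
  simp only [Nat.choose_zero_right]
  ring

/-- The step `S (b + 1) ≤ a · S b`, valid from `b = 2` on. -/
lemma sum_choose_descFactorial_succ_le (a b : ℕ) (ha : 2 ≤ a) :
    ∑ i ∈ Finset.range (b + 4), (b + 3).choose i * a.descFactorial i ≤
      a * ∑ i ∈ Finset.range (b + 3), (b + 2).choose i * a.descFactorial i := by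
  rw [sum_choose_succ_mul (b + 2), Finset.mul_sum]
  simp only [Finset.sum_range_succ' _ (b + 2), Finset.sum_range_succ' _ (b + 1),
    Finset.sum_range_succ' _ b]
  have hrest : ∑ i ∈ Finset.range b, (b + 2).choose (i + 1 + 1 + 1) *
        (a.descFactorial (i + 1 + 1 + 1) + a.descFactorial (i + 1 + 1 + 1 + 1)) ≤
      ∑ i ∈ Finset.range b,
        a * ((b + 2).choose (i + 1 + 1 + 1) * a.descFactorial (i + 1 + 1 + 1)) := by
    refine Finset.sum_le_sum fun i _ => ?_
    rw [Nat.descFactorial_succ a (i + 1 + 1 + 1), mul_left_comm a]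
    refine Nat.mul_le_mul_left _ ?_
    rw [← one_add_mul]
    exact Nat.mul_le_mul_right _ (by omega)
  have hc : 1 ≤ (b + 2).choose 2 := Nat.choose_pos (by omega)
  obtain ⟨k, rfl⟩ : ∃ k, a = k + 2 := ⟨a - 2, by omega⟩
  -- The deficit of the term `i = 2`.
  have h2 : 1 ≤ (b + 2).choose 2 * ((k + 1) * (k + 2)) := Nat.mul_pos hc (by positivity)
  have d1 : (k + 2).descFactorial 1 = k + 2 := by simp
  have d2 : (k + 2).descFactorial 2 = (k + 1) * (k + 2) := by
    simp [Nat.descFactorial_succ]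
  have d3 : (k + 2).descFactorial 3 = k * ((k + 1) * (k + 2)) := by
    simp [Nat.descFactorial_succ]
  simp only [zero_add, Nat.reduceAdd, d1, d2, d3, Nat.choose_zero_right, Nat.choose_one_right,
    Nat.descFactorial_zero]
  nlinarith [hrest, h2]

/-- For `n₁ ≥ 2` and `n₂ ≤ n₁`:
`(n₁ − 1) · ∑_{i=0}^{n₂} C(n₂, i) · descFactorial n₁ i ≤ n₁ ^ (n₂ + 1)`,
i.e. `∑_{i=0}^{n₂} C(n₂, i) · descFactorial n₁ i ≤ n₁ ^ n₂ · (1 + 1/(n₁ − 1))`. -/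
theorem sum_choose_descFactorial_le (n₁ n₂ : ℕ) (h₁ : 2 ≤ n₁) (h₂ : n₂ ≤ n₁) :
    (n₁ - 1) * ∑ i ∈ Finset.range (n₂ + 1), n₂.choose i * n₁.descFactorial i ≤
      n₁ ^ (n₂ + 1) := by
  clear h₂
  match n₂ with
  | 0 => simp
  | 1 =>
    obtain ⟨k, rfl⟩ : ∃ k, n₁ = k + 1 := ⟨n₁ - 1, by omega⟩
    simp [Finset.sum_range_succ]
    nlinarith
  | b + 2 =>
    induction b with
    | zero =>
      obtain ⟨k, rfl⟩ : ∃ k, n₁ = k + 1 := ⟨n₁ - 1, by omega⟩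
      simp [Finset.sum_range_succ, Nat.descFactorial_succ]
      nlinarith
    | succ b ih =>
      calc (n₁ - 1) * ∑ i ∈ Finset.range (b + 4), (b + 3).choose i * n₁.descFactorial i
          ≤ (n₁ - 1) * (n₁ * ∑ i ∈ Finset.range (b + 3),
              (b + 2).choose i * n₁.descFactorial i) :=
            Nat.mul_le_mul_left _ (sum_choose_descFactorial_succ_le n₁ b h₁)
        _ = n₁ * ((n₁ - 1) * ∑ i ∈ Finset.range (b + 3),
              (b + 2).choose i * n₁.descFactorial i) := by ring
        _ ≤ n₁ * n₁ ^ (b + 3) := Nat.mul_le_mul_left _ ih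
        _ = n₁ ^ (b + 4) := by ring
end

section
/- For all natural numbers n₁, n₂ with n₁ ≥ n₂ and n₂ ≥ 4, the following inequality holds: ∑_{i=0}^{n₂} C(n₂, i) · descFactorial(n₁, i) ≤ n₁^{n₂}. -/
/-!
Let `f(m, n) = ∑ i, C(n, i) · descFactorial(m, i)`, the number of partial matchings of `K_{m,n}`.
Deciding whether (and where) the last vertex of the `n`-side is matched gives
`f(m+1, n+1) = f(m+1, n) + (m+1) f(m, n)`. Induction on `n` then suffices: for `n ≤ m`,
`f(m+1, n+1) ≤ (m+1)^n + (m+1) m^n ≤ (m+1)^n + m (m+1)^n = (m+1)^(n+1)`.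
The base case `n = 4` is the polynomial inequality `m^4 - 2m^3 + 5m^2 + 1 ≤ m^4` for `m ≥ 4`.
-/

theorem sum_choose_descFactorial_succ_succ (m n : ℕ) :
    ∑ i ∈ Finset.range (n + 1 + 1), (n + 1).choose i * (m + 1).descFactorial i =
      ∑ i ∈ Finset.range (n + 1), n.choose i * (m + 1).descFactorial i +
        (m + 1) * ∑ i ∈ Finset.range (n + 1), n.choose i * m.descFactorial i := by
  -- Adding the zero term `i = n + 1` lets the first sum absorb the shift in Pascal's rule.
  have h : ∑ i ∈ Finset.range (n + 1), n.choose i * (m + 1).descFactorial i =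
      ∑ i ∈ Finset.range (n + 1 + 1), n.choose i * (m + 1).descFactorial i := by
    rw [Finset.sum_range_succ _ (n + 1)]
    simp
  rw [h, Finset.sum_range_succ', Finset.sum_range_succ' _ (n + 1), Finset.mul_sum,
    add_right_comm, ← Finset.sum_add_distrib]
  simp only [Nat.choose_zero_right]
  congr 1
  refine Finset.sum_congr rfl fun i _ => ?_
  rw [Nat.choose_succ_succ', Nat.succ_descFactorial_succ]
  ring

/-- For `n₁ ≥ n₂ ≥ 4`: `∑_{i=0}^{n₂} C(n₂, i) · descFactorial n₁ i ≤ n₁ ^ n₂`. -/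
theorem sum_choose_descFactorial_le_pow (n₁ n₂ : ℕ) (h₁ : n₂ ≤ n₁) (h₂ : 4 ≤ n₂) :
    ∑ i ∈ Finset.range (n₂ + 1), n₂.choose i * n₁.descFactorial i ≤ n₁ ^ n₂ := by
  induction n₂, h₂ using Nat.le_induction generalizing n₁ with
  | base =>
    obtain ⟨k, rfl⟩ := Nat.exists_eq_add_of_le' h₁
    have c2 : Nat.choose 4 2 = 6 := rfl
    have c3 : Nat.choose 4 3 = 4 := rfl
    simp only [Finset.sum_range_succ, Finset.sum_range_zero, Nat.succ_descFactorial_succ,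
      Nat.descFactorial_zero, Nat.choose_zero_right, Nat.choose_one_right, Nat.choose_self, c2, c3]
    ring_nf
    nlinarith [Nat.zero_le (k ^ 2), Nat.zero_le (k ^ 3)]
  | succ n hn ih =>
    obtain ⟨m, rfl⟩ : ∃ m, n₁ = m + 1 := ⟨n₁ - 1, by omega⟩
    have hm : n ≤ m := by omega
    obtain ⟨j, rfl⟩ : ∃ j, n = j + 1 := ⟨n - 1, by omega⟩
    rw [sum_choose_descFactorial_succ_succ]
    have hpow : m ^ j ≤ (m + 1) ^ j := Nat.pow_le_pow_left (Nat.le_succ m) j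
    calc _ ≤ (m + 1) ^ (j + 1) + (m + 1) * m ^ (j + 1) :=
          Nat.add_le_add (ih (m + 1) (by omega)) (Nat.mul_le_mul_left _ (ih m hm))
      _ = (m + 1) ^ (j + 1) + (m + 1) * m * m ^ j := by ring
      _ ≤ (m + 1) ^ (j + 1) + (m + 1) * m * (m + 1) ^ j := by gcongr
      _ = (m + 1) ^ (j + 1 + 1) := by ring
end

section
/- Let φ be an fHML formula such that every name-variable binder (⋁_x, ⋀_x, Иx, and each parameter variable x of a fixpoint binder μX(x⃗) or νX(x⃗)) binds a variable occurring free in its body, and such that for every fixpoint subformula (μX(x⃗).φ′)(u⃗) or (νX(x⃗).φ′)(u⃗) of φ the recursion variable X occurs free in φ′. Then |supp(φ)| + 2·‖φ‖ + ζ(φ) ≤ |φ|, where supp(φ) is the finite set of names occurring in φ, ‖φ‖ is the name-binder count of φ, and ζ(φ) is the number of distinct free name variables of φ. -/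
/-!
The inequality is proved by induction on `φ`. Each entry of a vector `u⃗` is either a name or a
variable, so `u⃗` contributes at most `|u⃗|` to `|supp| + ζ` (`card_nmList_add_card_vList_le`);
unions are bounded by sums of cardinalities, and `max` by a sum.

The only delicate case is a fixpoint `(μX(x⃗).φ)(u⃗)`: the argument vector `u⃗` can add `|u⃗|` new
names and free variables, but its length is not counted by the size. It is paid for by the `|x⃗|`
pairwise distinct variables, free in the body, that the binder removes from the free variables
(`card_fixpoint_le`).
-/

namespace FHML

/-- Names or name variables: `Sum.inl a` is the concrete name `a` (names are drawn
from a countably infinite set, here `ℕ`); `Sum.inr x` is the name variable `x`. -/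
abbrev NV : Type := ℕ ⊕ ℕ

/-- fHML formulas over a tag type `Tag`.  Recursion variables are drawn from `ℕ`. -/
inductive Formula (Tag : Type) : Type
  | eq (u v : NV)                                            -- u = v
  | neq (u v : NV)                                           -- u ≠ v
  | or (φ₁ φ₂ : Formula Tag)                                 -- φ₁ ∨ φ₂
  | and (φ₁ φ₂ : Formula Tag)                                -- φ₁ ∧ φ₂
  | neg (φ : Formula Tag)                                    -- ¬φ
  | bigOr (x : ℕ) (φ : Formula Tag)                          -- ⋁_x φ
  | bigAnd (x : ℕ) (φ : Formula Tag)                         -- ⋀_x φ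
  | fresh (x : ℕ) (φ : Formula Tag)                          -- Иx.φ
  | diam (t : Tag) (us : List NV) (φ : Formula Tag)          -- ⟨t, u⃗⟩φ
  | box (t : Tag) (us : List NV) (φ : Formula Tag)           -- [t, u⃗]φ
  | rvar (X : ℕ) (us : List NV)                              -- X(u⃗)
  | mu (X : ℕ) (xs : List ℕ) (φ : Formula Tag) (us : List NV)   -- (μX(x⃗).φ)(u⃗)
  | nu (X : ℕ) (xs : List ℕ) (φ : Formula Tag) (us : List NV)   -- (νX(x⃗).φ)(u⃗)

variable {Tag : Type}

/-- Size of a formula. -/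
def size : Formula Tag → ℕ
  | .eq _ _ => 2
  | .neq _ _ => 2
  | .or φ₁ φ₂ => 1 + size φ₁ + size φ₂
  | .and φ₁ φ₂ => 1 + size φ₁ + size φ₂
  | .neg φ => 1 + size φ
  | .bigOr _ φ => 2 + size φ
  | .bigAnd _ φ => 2 + size φ
  | .fresh _ φ => 2 + size φ
  | .diam _ us φ => 1 + us.length + size φ
  | .box _ us φ => 1 + us.length + size φ
  | .rvar _ us => 1 + us.length
  | .mu _ xs φ _ => 1 + size φ + 2 * xs.length
  | .nu _ xs φ _ => 1 + size φ + 2 * xs.length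

/-- The name-binder count `‖φ‖`. -/
def bcount : Formula Tag → ℕ
  | .eq _ _ => 0
  | .neq _ _ => 0
  | .or φ₁ φ₂ => max (bcount φ₁) (bcount φ₂)
  | .and φ₁ φ₂ => max (bcount φ₁) (bcount φ₂)
  | .neg φ => bcount φ
  | .bigOr _ φ => 1 + bcount φ
  | .bigAnd _ φ => 1 + bcount φ
  | .fresh _ φ => 1 + bcount φ
  | .diam _ _ φ => bcount φ
  | .box _ _ φ => bcount φ
  | .rvar _ _ => 0
  | .mu _ xs φ _ => bcount φ + xs.length
  | .nu _ xs φ _ => bcount φ + xs.length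

/-- The concrete names appearing in a name-or-variable. -/
def nmOf : NV → Finset ℕ
  | Sum.inl a => {a}
  | Sum.inr _ => ∅

/-- The concrete names appearing in a list of names-or-variables. -/
def nmList (us : List NV) : Finset ℕ := us.foldr (fun u s => nmOf u ∪ s) ∅

/-- The name variables appearing in a name-or-variable. -/
def vOf : NV → Finset ℕ
  | Sum.inl _ => ∅
  | Sum.inr x => {x}

/-- The name variables appearing in a list of names-or-variables. -/
def vList (us : List NV) : Finset ℕ := us.foldr (fun u s => vOf u ∪ s) ∅

/-- `supp φ`: the (finite) set of concrete names occurring in `φ`. -/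
def supp : Formula Tag → Finset ℕ
  | .eq u v => nmOf u ∪ nmOf v
  | .neq u v => nmOf u ∪ nmOf v
  | .or φ₁ φ₂ => supp φ₁ ∪ supp φ₂
  | .and φ₁ φ₂ => supp φ₁ ∪ supp φ₂
  | .neg φ => supp φ
  | .bigOr _ φ => supp φ
  | .bigAnd _ φ => supp φ
  | .fresh _ φ => supp φ
  | .diam _ us φ => nmList us ∪ supp φ
  | .box _ us φ => nmList us ∪ supp φ
  | .rvar _ us => nmList us
  | .mu _ _ φ us => supp φ ∪ nmList us
  | .nu _ _ φ us => supp φ ∪ nmList us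

/-- The (finite) set of free name variables of `φ`. -/
def freeNV : Formula Tag → Finset ℕ
  | .eq u v => vOf u ∪ vOf v
  | .neq u v => vOf u ∪ vOf v
  | .or φ₁ φ₂ => freeNV φ₁ ∪ freeNV φ₂
  | .and φ₁ φ₂ => freeNV φ₁ ∪ freeNV φ₂
  | .neg φ => freeNV φ
  | .bigOr x φ => freeNV φ \ {x}
  | .bigAnd x φ => freeNV φ \ {x}
  | .fresh x φ => freeNV φ \ {x}
  | .diam _ us φ => vList us ∪ freeNV φ
  | .box _ us φ => vList us ∪ freeNV φ
  | .rvar _ us => vList us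
  | .mu _ xs φ us => (freeNV φ \ xs.toFinset) ∪ vList us
  | .nu _ xs φ us => (freeNV φ \ xs.toFinset) ∪ vList us

/-- The (finite) set of free recursion variables of `φ`. -/
def freeRV : Formula Tag → Finset ℕ
  | .eq _ _ => ∅
  | .neq _ _ => ∅
  | .or φ₁ φ₂ => freeRV φ₁ ∪ freeRV φ₂
  | .and φ₁ φ₂ => freeRV φ₁ ∪ freeRV φ₂
  | .neg φ => freeRV φ
  | .bigOr _ φ => freeRV φ
  | .bigAnd _ φ => freeRV φ
  | .fresh _ φ => freeRV φ
  | .diam _ _ φ => freeRV φ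
  | .box _ _ φ => freeRV φ
  | .rvar X _ => {X}
  | .mu X _ φ _ => freeRV φ \ {X}
  | .nu X _ φ _ => freeRV φ \ {X}

/-- Well-formedness: every name-variable binder binds a variable occurring free in its
body (the parameter variables `x⃗` of a fixpoint binder being pairwise distinct, with
`|x⃗| = |u⃗|` as required by the grammar), and in every fixpoint subformula
`(μX(x⃗).φ′)(u⃗)` or `(νX(x⃗).φ′)(u⃗)` the recursion variable `X` occurs free in `φ′`. -/
def wf : Formula Tag → Prop
  | .eq _ _ => True
  | .neq _ _ => True
  | .or φ₁ φ₂ => wf φ₁ ∧ wf φ₂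
  | .and φ₁ φ₂ => wf φ₁ ∧ wf φ₂
  | .neg φ => wf φ
  | .bigOr x φ => x ∈ freeNV φ ∧ wf φ
  | .bigAnd x φ => x ∈ freeNV φ ∧ wf φ
  | .fresh x φ => x ∈ freeNV φ ∧ wf φ
  | .diam _ _ φ => wf φ
  | .box _ _ φ => wf φ
  | .rvar _ _ => True
  | .mu X xs φ us => xs.Nodup ∧ xs.length = us.length ∧ (∀ x ∈ xs, x ∈ freeNV φ) ∧
      X ∈ freeRV φ ∧ wf φ
  | .nu X xs φ us => xs.Nodup ∧ xs.length = us.length ∧ (∀ x ∈ xs, x ∈ freeNV φ) ∧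
      X ∈ freeRV φ ∧ wf φ

theorem card_nmOf_add_card_vOf (u : NV) : (nmOf u).card + (vOf u).card = 1 := by
  cases u <;> simp [nmOf, vOf]

theorem card_nmList_add_card_vList_le (us : List NV) :
    (nmList us).card + (vList us).card ≤ us.length := by
  induction us with
  | nil => simp [nmList, vList]
  | cons u us ih =>
    have hn : nmList (u :: us) = nmOf u ∪ nmList us := rfl
    have hv : vList (u :: us) = vOf u ∪ vList us := rfl
    rw [hn, hv, List.length_cons]
    have h₁ := Finset.card_union_le (nmOf u) (nmList us)
    have h₂ := Finset.card_union_le (vOf u) (vList us)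
    have h₃ := card_nmOf_add_card_vOf u
    omega

/-- The set-theoretic content of the literals `u = v` and `u ≠ v`. -/
theorem card_literal_le (u v : NV) :
    (nmOf u ∪ nmOf v).card + (vOf u ∪ vOf v).card ≤ 2 := by
  have h₁ := Finset.card_union_le (nmOf u) (nmOf v)
  have h₂ := Finset.card_union_le (vOf u) (vOf v)
  have h₃ := card_nmOf_add_card_vOf u
  have h₄ := card_nmOf_add_card_vOf v
  omega

/-- Passing from the body of a fixpoint, with names `S` and free variables `F`, to the fixpoint
itself does not increase the number of names plus free variables: the entries of `us` are
compensated by the equally many distinct parameters `xs` removed from `F`. -/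
theorem card_fixpoint_le (S F : Finset ℕ) (xs : List ℕ) (us : List NV) (hnd : xs.Nodup)
    (hlen : xs.length = us.length) (hsub : ∀ x ∈ xs, x ∈ F) :
    (S ∪ nmList us).card + ((F \ xs.toFinset) ∪ vList us).card ≤ S.card + F.card := by
  have h₁ := Finset.card_union_le S (nmList us)
  have h₂ := Finset.card_union_le (F \ xs.toFinset) (vList us)
  have h₃ := card_nmList_add_card_vList_le us
  have hss : xs.toFinset ⊆ F := fun x hx => hsub x (List.mem_toFinset.mp hx)
  have h₄ := Finset.card_sdiff_add_card_eq_card hss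
  rw [List.toFinset_card_of_nodup hnd] at h₄
  omega

/-- `|supp(φ)| + 2‖φ‖ + ζ(φ) ≤ |φ|` for well-formed formulas. -/
theorem supp_bcount_freeNV_le_size {Tag : Type} [Fintype Tag]
    (φ : Formula Tag) (h : wf φ) :
    (supp φ).card + 2 * bcount φ + (freeNV φ).card ≤ size φ := by
  induction φ with
  | eq u v | neq u v =>
    have := card_literal_le u v
    simp only [supp, bcount, freeNV, size]
    omega
  | or φ₁ φ₂ ih₁ ih₂ | and φ₁ φ₂ ih₁ ih₂ =>
    have h₁ := ih₁ h.1
    have h₂ := ih₂ h.2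
    have h₃ := Finset.card_union_le (supp φ₁) (supp φ₂)
    have h₄ := Finset.card_union_le (freeNV φ₁) (freeNV φ₂)
    simp only [supp, bcount, freeNV, size]
    omega
  | neg φ ih =>
    have h₁ := ih h
    simp only [supp, bcount, freeNV, size]
    omega
  | bigOr x φ ih | bigAnd x φ ih | fresh x φ ih =>
    have h₁ := ih h.2
    have h₂ := Finset.card_le_card (Finset.sdiff_subset (s := freeNV φ) (t := {x}))
    simp only [supp, bcount, freeNV, size]
    omega
  | diam t us φ ih | box t us φ ih =>
    have h₁ := ih h
    have h₂ := card_nmList_add_card_vList_le us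
    have h₃ := Finset.card_union_le (nmList us) (supp φ)
    have h₄ := Finset.card_union_le (vList us) (freeNV φ)
    simp only [supp, bcount, freeNV, size]
    omega
  | rvar X us =>
    have := card_nmList_add_card_vList_le us
    simp only [supp, bcount, freeNV, size]
    omega
  | mu X xs φ us ih | nu X xs φ us ih =>
    obtain ⟨hnd, hlen, hsub, -, hwf⟩ := h
    have h₁ := ih hwf
    have h₂ := card_fixpoint_le (supp φ) (freeNV φ) xs us hnd hlen hsub
    simp only [supp, bcount, freeNV, size]
    omega

end FHML
end
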